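/- arXiv:math/0507264 — 2 statements merged into one kernel-verified Lean document; each statement's English description precedes it below -/
import Mathlib

section
/- Let a < b and α < β be real numbers. Let u be C² on (a,b) and C¹ on [a,b], with u'(b) = 0 and u(a) > u(t) > u(b) for all t ∈ (a,b). Let v be C² on (α,β) and C¹ on [α,β], with v'(β) = 0, v'(s) > 0 for all s ∈ (α,β), v(α) ≤ u(b), and v(β) = u(a). Suppose that whenever u(t) = v(s) for some t ∈ (a,b) and s ∈ (α,β), one has u''(t) ≤ v''(s). Then β − α = b − a and v(s) = u(a + β − s) for all s ∈ [α,β]; in particular v is a reflection of u and v(α) = u(b). -/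
/-!
Read the height as the state: with `σ` the inverse of the increasing function `v`, the identity
`((v' ∘ σ)²)' = 2 v'' ∘ σ` turns the hypothesis into the one-sided Newton equation `u'' ≤ F(u)` with
`F = v'' ∘ σ`, and the energy `e = u'² - Φ(u)`, `Φ = (v' ∘ σ)²`, satisfies `e' = 2 u' (u'' - F(u))`.
Hence `e` grows wherever `u` decreases. Since `e(a) ≥ 0 ≥ e(b)`, it is enough to know that `u' < 0`
on `(a, b)`: then `e = 0`, so `u' = -v'(σ(u))`, i.e. `(σ ∘ u)' = -1`.

To see that `u' < 0`, follow `e` only along the running minima of `u`. There `u' ≤ 0`, so `e` does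
not decrease; and where the running minimum pauses, `u` has left a critical point and comes back to
the same height, which again does not decrease `e`. So `e ≥ 0` at every running minimum, whereas
`e = -Φ(u) < 0` at a critical one. Without critical running minima, `u` is strictly decreasing.
-/

open Set Filter Topology

section RunningMinima

variable {X Y : Type*} [LinearOrder X] [TopologicalSpace X] [CompactIccSpace X]

/-- The running minima (downward records) of `u` on `[a, b]`: the points at which `u` is minimal
among all points from `a` up to there. Ties with earlier points are allowed, which makes the set
closed. -/
def runningMinima [Preorder Y] (u : X → Y) (a b : X) : Set X :=
  {t ∈ Icc a b | IsMinOn u (Icc a t) t}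

theorem isCompact_runningMinima [OrderClosedTopology X] [Preorder Y] [TopologicalSpace Y]
    [ClosedIicTopology Y] {u : X → Y} {a b : X} (hu : ContinuousOn u (Icc a b)) :
    IsCompact (runningMinima u a b) := by
  have hinter : runningMinima u a b =
      Icc a b ∩ ⋂ x ∈ Icc a b, Iic x ∪ Icc a b ∩ u ⁻¹' Iic (u x) := by
    ext t
    simp only [runningMinima, mem_ofPred_eq, mem_inter_iff, mem_iInter, mem_union, mem_Iic,
      mem_preimage, isMinOn_iff]
    refine and_congr_right fun ht => ⟨fun h x hx => ?_, fun h x hx => ?_⟩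
    · exact (le_total t x).imp_right fun hxt => ⟨ht, h x ⟨hx.1, hxt⟩⟩
    · rcases h x ⟨hx.1, hx.2.trans ht.2⟩ with htx | h
      · rw [le_antisymm htx hx.2]
      · exact h.2
  rw [hinter]
  exact isCompact_Icc.inter_right <| isClosed_biInter fun x _ =>
    isClosed_Iic.union (hu.preimage_isClosed_of_isClosed isClosed_Icc isClosed_Iic)

theorem frequently_nhdsLT_mem_runningMinima [OrderTopology X] [DenselyOrdered X] [LinearOrder Y]
    [TopologicalSpace Y] [OrderTopology Y] {u : X → Y} {a b t : X} (hu : ContinuousOn u (Icc a b))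
    (hat : a < t) (htb : t ≤ b) (hlt : ∀ x ∈ Ico a t, u t < u x) :
    ∃ᶠ r in 𝓝[<] t, r ∈ runningMinima u a b := by
  intro hnot
  obtain ⟨c, hc, hcnot⟩ := (mem_nhdsLT_iff_exists_mem_Ico_Ioo_subset hat).1 hnot
  have hsub {y : X} (hy : y ≤ t) : Icc a y ⊆ Icc a b := Icc_subset_Icc_right (hy.trans htb)
  obtain ⟨m, hm, hmin_c⟩ := isCompact_Icc.exists_isMinOn (nonempty_Icc.2 hc.1)
    (hu.mono (hsub hc.2.le))
  have hum : u t < u m := hlt m ⟨hm.1, hm.2.trans_lt hc.2⟩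
  have htendsto : Tendsto u (𝓝[<] t) (𝓝 (u t)) := by
    rw [← nhdsWithin_Ioo_eq_nhdsLT hat]
    exact (hu t ⟨hat.le, htb⟩).mono (Ioo_subset_Icc_self.trans (hsub le_rfl))
  have : (𝓝[<] t).NeBot := nhdsLT_neBot_of_exists_lt ⟨a, hat⟩
  obtain ⟨y, huy, hcy⟩ :=
    ((htendsto.eventually (gt_mem_nhds hum)).and (Ioo_mem_nhdsLT hc.2)).exists
  have hay : a ≤ y := hc.1.trans hcy.1.le
  obtain ⟨r, hr, hmin_y⟩ := isCompact_Icc.exists_isMinOn (nonempty_Icc.2 hay)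
    (hu.mono (hsub hcy.2.le))
  have hcr : c < r := by
    by_contra! hrc
    exact ((hmin_c ⟨hr.1, hrc⟩ : u m ≤ u r).trans (hmin_y (right_mem_Icc.2 hay))).not_gt huy
  exact hcnot ⟨hcr, hr.2.trans_lt hcy.2⟩
    ⟨hsub hcy.2.le hr, hmin_y.on_subset (Icc_subset_Icc_right hr.2)⟩

end RunningMinima

theorem eventually_nhdsLT_lt_of_hasDerivAt_pos {f : ℝ → ℝ} {f' t : ℝ} (hf : HasDerivAt f f' t)
    (hf' : 0 < f') : ∀ᶠ x in 𝓝[<] t, f x < f t := by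
  have hslope := (hasDerivAt_iff_tendsto_slope.1 hf).mono_left
    (nhdsWithin_mono t fun x (hx : x < t) => hx.ne)
  filter_upwards [hslope.eventually (lt_mem_nhds hf'), self_mem_nhdsWithin] with x hx hxt
  rw [slope_def_field, lt_div_iff_of_neg (sub_neg.2 hxt), zero_mul] at hx
  exact sub_neg.1 hx

theorem hasDerivAt_nonpos_of_isMinOn_Icc {f : ℝ → ℝ} {f' a t : ℝ} (hat : a < t)
    (hf : HasDerivAt f f' t) (hmin : IsMinOn f (Icc a t) t) : f' ≤ 0 := by
  have hdir : a - t ∈ posTangentConeAt (Icc a t) t :=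
    sub_mem_posTangentConeAt_of_segment_subset ((convex_Icc a t).segment_subset
      (right_mem_Icc.2 hat.le) (left_mem_Icc.2 hat.le))
  have h := hmin.localize.hasFDerivWithinAt_nonneg hf.hasFDerivAt.hasFDerivWithinAt hdir
  simp only [ContinuousLinearMap.toSpanSingleton_apply, smul_eq_mul] at h
  exact nonpos_of_mul_nonneg_right h (sub_neg.2 hat)

section MonotoneAlongRunningMinima

variable {a b : ℝ} {u e e' : ℝ → ℝ}

theorem isMinOn_runningMinima_of_hasDerivAt_pos (hab : a ≤ b)
    (hu : ContinuousOn u (Icc a b)) (he : ContinuousOn e (Icc a b))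
    (hderiv : ∀ t ∈ runningMinima u a b, a < t → HasDerivAt e (e' t) t)
    (hpos : ∀ t ∈ runningMinima u a b, a < t → 0 < e' t)
    (hlevel : ∀ t ∈ runningMinima u a b, ∀ x ∈ Ico a t, u x = u t → e x < e t) :
    IsMinOn e (runningMinima u a b) a := by
  have ha : a ∈ runningMinima u a b := ⟨left_mem_Icc.2 hab, by simp [IsMinOn, IsMinFilter]⟩
  obtain ⟨t, ht, hmin⟩ :=
    (isCompact_runningMinima hu).exists_isMinOn ⟨a, ha⟩ (he.mono fun _ h => h.1)
  obtain rfl | hat := ht.1.1.eq_or_lt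
  · exact hmin
  exfalso
  by_cases hstrict : ∀ x ∈ Ico a t, u t < u x
  · obtain ⟨r, hr, hlt⟩ :=
      ((frequently_nhdsLT_mem_runningMinima hu hat ht.1.2 hstrict).and_eventually
        (eventually_nhdsLT_lt_of_hasDerivAt_pos (hderiv t ht hat) (hpos t ht hat))).exists
    exact (hmin hr : e t ≤ e r).not_gt hlt
  · push Not at hstrict
    obtain ⟨x, hx, hxt⟩ := hstrict
    have hux : u x = u t := hxt.antisymm (ht.2 (Ico_subset_Icc_self hx))
    have hxM : x ∈ runningMinima u a b :=
      ⟨⟨hx.1, hx.2.le.trans ht.1.2⟩, fun z hz => hux.trans_le (ht.2 ⟨hz.1, hz.2.trans hx.2.le⟩)⟩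
    exact (hmin hxM : e t ≤ e x).not_gt (hlevel t ht x hx hux)

theorem isMinOn_runningMinima_of_hasDerivAt_nonneg (hab : a ≤ b)
    (hu : ContinuousOn u (Icc a b)) (he : ContinuousOn e (Icc a b))
    (hderiv : ∀ t ∈ runningMinima u a b, a < t → HasDerivAt e (e' t) t)
    (hnonneg : ∀ t ∈ runningMinima u a b, a < t → 0 ≤ e' t)
    (hlevel : ∀ t ∈ runningMinima u a b, ∀ x ∈ Ico a t, u x = u t → e x ≤ e t) :
    IsMinOn e (runningMinima u a b) a := by
  have htilt {ε : ℝ} (hε : 0 < ε) : IsMinOn (fun t => e t + ε * t) (runningMinima u a b) a := by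
    refine isMinOn_runningMinima_of_hasDerivAt_pos (e' := fun t => e' t + ε) hab hu
      (he.add (by fun_prop)) (fun t ht hat => ?_)
      (fun t ht hat => add_pos_of_nonneg_of_pos (hnonneg t ht hat) hε)
      (fun t ht x hx hux => add_lt_add_of_le_of_lt (hlevel t ht x hx hux)
        (mul_lt_mul_of_pos_left hx.2 hε))
    exact (hderiv t ht hat).add (by simpa using (hasDerivAt_id t).const_mul ε)
  intro r hr
  by_contra hnot
  have hlt : e r < e a := not_le.1 hnot
  obtain ⟨ε, hε, hsmall⟩ := exists_pos_mul_lt (sub_pos.2 hlt) (r - a)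
  have hle : e a + ε * a ≤ e r + ε * r := htilt hε hr
  linarith

end MonotoneAlongRunningMinima

/-- The regularity assumed of `u` on `[a, b]`: `u` is continuous, has a derivative `u'` that extends
continuously to the endpoints, and `u'` has a derivative `u''` on `(a, b)`. -/
structure HasTwoDerivsOn (u u' u'' : ℝ → ℝ) (a b : ℝ) : Prop where
  continuousOn : ContinuousOn u (Icc a b)
  continuousOn_deriv : ContinuousOn u' (Icc a b)
  hasDerivAt : ∀ t ∈ Ioo a b, HasDerivAt u (u' t) t
  hasDerivAt_deriv : ∀ t ∈ Ioo a b, HasDerivAt u' (u'' t) t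

theorem hasTwoDerivsOn_of_contDiffOn {u : ℝ → ℝ} {a b : ℝ} (hab : a < b)
    (hu2 : ContDiffOn ℝ 2 u (Ioo a b)) (hu1 : ContDiffOn ℝ 1 u (Icc a b)) :
    HasTwoDerivsOn u (derivWithin u (Icc a b)) (deriv (deriv u)) a b where
  continuousOn := hu1.continuousOn
  continuousOn_deriv := hu1.continuousOn_derivWithin (uniqueDiffOn_Icc hab) le_rfl
  hasDerivAt t ht :=
    (hu1.differentiableOn one_ne_zero t (Ioo_subset_Icc_self ht)).hasDerivWithinAt.hasDerivAt
      (Icc_mem_nhds ht.1 ht.2)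
  hasDerivAt_deriv t ht := by
    have hmem : Ioo a b ∈ 𝓝 t := isOpen_Ioo.mem_nhds ht
    have hu' : ContDiffOn ℝ 1 (deriv u) (Ioo a b) := hu2.deriv_of_isOpen isOpen_Ioo le_rfl
    refine ((hu'.differentiableOn one_ne_zero).differentiableAt hmem).hasDerivAt
      |>.congr_of_eventuallyEq ?_
    filter_upwards [hmem] with x hx using derivWithin_of_mem_nhds (Icc_mem_nhds hx.1 hx.2)

/-- `u` solves the one-sided Newton equation `u'' ≤ F(u)` on `(a, b)`, where the force `F` derives
from `Φ` in the sense that `Φ' = 2 F`; so `Φ` is minus twice the usual potential energy. -/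
structure NewtonSubsolution (u u' u'' Φ F : ℝ → ℝ) (a b : ℝ) : Prop
    extends HasTwoDerivsOn u u' u'' a b where
  continuousOn_potential : ContinuousOn (fun t => Φ (u t)) (Icc a b)
  hasDerivAt_potential : ∀ t ∈ Ioo a b, HasDerivAt Φ (2 * F (u t)) (u t)
  le_force : ∀ t ∈ Ioo a b, u'' t ≤ F (u t)

/-- Twice the total energy of a motion `u` with velocity `u'` under the force `Φ' / 2`. -/
def energy (u u' Φ : ℝ → ℝ) (t : ℝ) : ℝ :=
  u' t ^ 2 - Φ (u t)

namespace NewtonSubsolution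

variable {u u' u'' Φ F : ℝ → ℝ} {a b t : ℝ}

theorem continuousOn_energy (h : NewtonSubsolution u u' u'' Φ F a b) :
    ContinuousOn (energy u u' Φ) (Icc a b) :=
  (h.continuousOn_deriv.pow 2).sub h.continuousOn_potential

theorem hasDerivAt_energy (h : NewtonSubsolution u u' u'' Φ F a b) (ht : t ∈ Ioo a b) :
    HasDerivAt (energy u u' Φ) (2 * u' t * (u'' t - F (u t))) t := by
  refine (((h.hasDerivAt_deriv t ht).pow 2).sub
    ((h.hasDerivAt_potential t ht).comp t (h.hasDerivAt t ht))).congr_deriv ?_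
  ring

theorem deriv_energy_nonneg (h : NewtonSubsolution u u' u'' Φ F a b) (ht : t ∈ Ioo a b)
    (hu' : u' t ≤ 0) : 0 ≤ 2 * u' t * (u'' t - F (u t)) :=
  mul_nonneg_of_nonpos_of_nonpos (mul_nonpos_of_nonneg_of_nonpos zero_le_two hu')
    (sub_nonpos.2 (h.le_force t ht))

theorem energy_left_le_of_isMinOn (h : NewtonSubsolution u u' u'' Φ F a b)
    (hlt : ∀ t ∈ Ioo a b, u t < u a) (ht : t ∈ Ioo a b) (hmin : IsMinOn u (Icc a t) t) :
    energy u u' Φ a ≤ energy u u' Φ t := by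
  have hsub : Icc a t ⊆ Icc a b := Icc_subset_Icc_right ht.2.le
  have hIoo : ∀ r ∈ runningMinima u a t, a < r → r ∈ Ioo a b := fun r hr har =>
    ⟨har, hr.1.2.trans_lt ht.2⟩
  refine isMinOn_runningMinima_of_hasDerivAt_nonneg ht.1.le (h.continuousOn.mono hsub)
    (h.continuousOn_energy.mono hsub) (fun r hr har => h.hasDerivAt_energy (hIoo r hr har))
    (fun r hr har => ?_) (fun r hr x hx hux => ?_) ⟨right_mem_Icc.2 ht.1.le, hmin⟩
  · exact h.deriv_energy_nonneg (hIoo r hr har)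
      (hasDerivAt_nonpos_of_isMinOn_Icc har (h.hasDerivAt r (hIoo r hr har)) hr.2)
  · have hr_mem := hIoo r hr (hx.1.trans_lt hx.2)
    have hax : a < x := hx.1.lt_of_ne (by rintro rfl; exact (hlt r hr_mem).ne' hux)
    have hlocal : IsLocalMin u x := by
      filter_upwards [Icc_mem_nhds hax hx.2] with z hz using hux.trans_le (hr.2 hz)
    have hcrit : u' x = 0 :=
      hlocal.hasDerivAt_eq_zero (h.hasDerivAt x ⟨hax, hx.2.trans hr_mem.2⟩)
    simpa [energy, hcrit, hux] using sq_nonneg (u' r)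

theorem deriv_neg (h : NewtonSubsolution u u' u'' Φ F a b) (ha : 0 ≤ energy u u' Φ a)
    (hlt : ∀ t ∈ Ioo a b, u t < u a) (hΦ : ∀ t ∈ Ioo a b, 0 < Φ (u t)) (ht : t ∈ Ioo a b) :
    u' t < 0 := by
  by_contra! hu't
  obtain ⟨q, hq, hmin⟩ := isCompact_Icc.exists_isMinOn (nonempty_Icc.2 ht.1.le)
    (h.continuousOn.mono (Icc_subset_Icc_right ht.2.le))
  have haq : a < q := hq.1.lt_of_ne (by
    rintro rfl
    exact (hmin (right_mem_Icc.2 ht.1.le) : u a ≤ u t).not_gt (hlt t ht))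
  have hq_mem : q ∈ Ioo a b := ⟨haq, hq.2.trans_lt ht.2⟩
  have hrecord : IsMinOn u (Icc a q) q := hmin.on_subset (Icc_subset_Icc_right hq.2)
  have hcrit : u' q = 0 := by
    obtain rfl | hqt := hq.2.eq_or_lt
    · exact (hasDerivAt_nonpos_of_isMinOn_Icc haq (h.hasDerivAt q ht) hrecord).antisymm hu't
    · exact (hmin.isLocalMin (Icc_mem_nhds haq hqt)).hasDerivAt_eq_zero (h.hasDerivAt q hq_mem)
  have hneg : energy u u' Φ q < 0 := by simpa [energy, hcrit] using hΦ q hq_mem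
  exact (ha.trans (h.energy_left_le_of_isMinOn hlt hq_mem hrecord)).not_gt hneg

theorem energy_eq_zero (h : NewtonSubsolution u u' u'' Φ F a b) (ha : 0 ≤ energy u u' Φ a)
    (hb : energy u u' Φ b ≤ 0) (hlt : ∀ t ∈ Ioo a b, u t < u a)
    (hΦ : ∀ t ∈ Ioo a b, 0 < Φ (u t)) (ht : t ∈ Icc a b) : energy u u' Φ t = 0 := by
  have hmono : MonotoneOn (energy u u' Φ) (Icc a b) := by
    refine monotoneOn_of_hasDerivWithinAt_nonneg (convex_Icc a b) h.continuousOn_energy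
      (f' := fun t => 2 * u' t * (u'' t - F (u t))) ?_ ?_ <;> rw [interior_Icc]
    · exact fun t ht => (h.hasDerivAt_energy ht).hasDerivWithinAt
    · exact fun t ht => h.deriv_energy_nonneg ht (h.deriv_neg ha hlt hΦ ht).le
  have hab : a ≤ b := ht.1.trans ht.2
  exact ((hmono ht (right_mem_Icc.2 hab) ht.2).trans hb).antisymm
    (ha.trans (hmono (left_mem_Icc.2 hab) ht ht.1))

theorem deriv_eq_neg_sqrt (h : NewtonSubsolution u u' u'' Φ F a b) (ha : 0 ≤ energy u u' Φ a)
    (hb : energy u u' Φ b ≤ 0) (hlt : ∀ t ∈ Ioo a b, u t < u a)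
    (hΦ : ∀ t ∈ Ioo a b, 0 < Φ (u t)) (ht : t ∈ Ioo a b) : u' t = -√(Φ (u t)) := by
  have hsq : u' t ^ 2 = Φ (u t) :=
    sub_eq_zero.1 (h.energy_eq_zero ha hb hlt hΦ (Ioo_subset_Icc_self ht))
  rw [← hsq, Real.sqrt_sq_eq_abs, abs_of_neg (h.deriv_neg ha hlt hΦ ht), neg_neg]

end NewtonSubsolution

theorem mapsTo_Icc_of_mapsTo_Ioo {X Y : Type*} [LinearOrder X] [TopologicalSpace X]
    [OrderTopology X] [DenselyOrdered X] [Preorder Y] [TopologicalSpace Y] [OrderClosedTopology Y]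
    {f : X → Y} {a b : X} {c d : Y} (hab : a < b) (hf : ContinuousOn f (Icc a b))
    (hmaps : MapsTo f (Ioo a b) (Ioo c d)) : MapsTo f (Icc a b) (Icc c d) := by
  rw [← closure_Ioo hab.ne] at hf ⊢
  exact (hmaps.closure_of_continuousOn hf).mono_right
    (closure_minimal Ioo_subset_Icc_self isClosed_Icc)

theorem continuousOn_image_of_leftInvOn {X Y : Type*} [TopologicalSpace X] [TopologicalSpace Y]
    [T2Space Y] {f : X → Y} {g : Y → X} {K : Set X} (hK : IsCompact K) (hf : ContinuousOn f K)
    (hg : LeftInvOn g f K) : ContinuousOn g (f '' K) := by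
  refine continuousOn_iff_isClosed.2 fun C hC =>
    ⟨f '' (K ∩ C), ((hK.inter_right hC).image_of_continuousOn
      (hf.mono inter_subset_left)).isClosed, ?_⟩
  ext y
  constructor
  · rintro ⟨hy, x, hx, rfl⟩
    exact ⟨⟨x, ⟨hx, hg hx ▸ hy⟩, rfl⟩, x, hx, rfl⟩
  · rintro ⟨⟨x, ⟨hxK, hxC⟩, rfl⟩, hy⟩
    exact ⟨mem_preimage.2 ((hg hxK).symm ▸ hxC), hy⟩

namespace HasTwoDerivsOn

variable {u u' u'' v v' v'' σ : ℝ → ℝ} {a b α β s : ℝ}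

theorem strictMonoOn (hv : HasTwoDerivsOn v v' v'' α β) (hv' : ∀ s ∈ Ioo α β, 0 < v' s) :
    StrictMonoOn v (Icc α β) := by
  refine strictMonoOn_of_deriv_pos (convex_Icc α β) hv.continuousOn fun s hs => ?_
  rw [interior_Icc] at hs
  exact (hv.hasDerivAt s hs).deriv.symm ▸ hv' s hs

theorem continuousOn_leftInv (hv : HasTwoDerivsOn v v' v'' α β) (hαβ : α ≤ β)
    (hσ : LeftInvOn σ v (Icc α β)) : ContinuousOn σ (Icc (v α) (v β)) :=
  (continuousOn_image_of_leftInvOn isCompact_Icc hv.continuousOn hσ).mono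
    (intermediate_value_Icc hαβ hv.continuousOn)

theorem continuousOn_deriv_leftInv (hv : HasTwoDerivsOn v v' v'' α β) (hαβ : α ≤ β)
    (hσ : LeftInvOn σ v (Icc α β)) : ContinuousOn (fun y => v' (σ y)) (Icc (v α) (v β)) :=
  hv.continuousOn_deriv.comp (hv.continuousOn_leftInv hαβ hσ)
    (hσ.mapsTo (intermediate_value_Icc hαβ hv.continuousOn))

theorem hasDerivAt_leftInv (hv : HasTwoDerivsOn v v' v'' α β) (hv' : ∀ s ∈ Ioo α β, 0 < v' s)
    (hσ : LeftInvOn σ v (Icc α β)) (hs : s ∈ Ioo α β) : HasDerivAt σ (v' s)⁻¹ (v s) := by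
  have hαβ : α ≤ β := (hs.1.trans hs.2).le
  have hs_mem := Ioo_subset_Icc_self hs
  have hσs : σ (v s) = s := hσ hs_mem
  have hmono := hv.strictMonoOn hv'
  have hnhds : Icc (v α) (v β) ∈ 𝓝 (v s) := Icc_mem_nhds
    (hmono (left_mem_Icc.2 hαβ) hs_mem hs.1) (hmono hs_mem (right_mem_Icc.2 hαβ) hs.2)
  refine HasDerivAt.of_local_left_inverse (f := v) ((hv.continuousOn_leftInv hαβ hσ).continuousAt
    hnhds) (hσs.symm ▸ hv.hasDerivAt s hs) (hv' s hs).ne' ?_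
  filter_upwards [hnhds] with y hy
  obtain ⟨x, hx, rfl⟩ := intermediate_value_Icc hαβ hv.continuousOn hy
  rw [hσ hx]

theorem hasDerivAt_sq_deriv_comp_leftInv (hv : HasTwoDerivsOn v v' v'' α β)
    (hv' : ∀ s ∈ Ioo α β, 0 < v' s) (hσ : LeftInvOn σ v (Icc α β)) (hs : s ∈ Ioo α β) :
    HasDerivAt (fun y => v' (σ y) ^ 2) (2 * v'' s) (v s) := by
  have hσs : σ (v s) = s := hσ (Ioo_subset_Icc_self hs)
  have hv'σ : HasDerivAt (fun y => v' (σ y)) (v'' s * (v' s)⁻¹) (v s) :=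
    HasDerivAt.comp (v s) (hσs.symm ▸ hv.hasDerivAt_deriv s hs) (hv.hasDerivAt_leftInv hv' hσ hs)
  refine (hv'σ.pow 2).congr_deriv ?_
  have := (hv' s hs).ne'
  simp only [hσs, Nat.cast_ofNat, Nat.add_one_sub_one, pow_one]
  field_simp

theorem newtonSubsolution (hu : HasTwoDerivsOn u u' u'' a b) (hv : HasTwoDerivsOn v v' v'' α β)
    (hab : a < b) (hαβ : α ≤ β) (hv' : ∀ s ∈ Ioo α β, 0 < v' s) (hσ : LeftInvOn σ v (Icc α β))
    (hmaps : MapsTo u (Ioo a b) (Ioo (v α) (v β)))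
    (hle : ∀ t ∈ Ioo a b, ∀ s ∈ Ioo α β, u t = v s → u'' t ≤ v'' s) :
    NewtonSubsolution u u' u'' (fun y => v' (σ y) ^ 2) (fun y => v'' (σ y)) a b where
  toHasTwoDerivsOn := hu
  continuousOn_potential := ((hv.continuousOn_deriv_leftInv hαβ hσ).comp hu.continuousOn
    (mapsTo_Icc_of_mapsTo_Ioo hab hu.continuousOn hmaps)).pow 2
  hasDerivAt_potential t ht := by
    obtain ⟨s, hs, hst⟩ := intermediate_value_Ioo hαβ hv.continuousOn (hmaps ht)
    simp only [← hst, hσ (Ioo_subset_Icc_self hs)]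
    exact hv.hasDerivAt_sq_deriv_comp_leftInv hv' hσ hs
  le_force t ht := by
    obtain ⟨s, hs, hst⟩ := intermediate_value_Ioo hαβ hv.continuousOn (hmaps ht)
    simp only [← hst, hσ (Ioo_subset_Icc_self hs)]
    exact hle t ht s hs hst.symm

theorem deriv_eq_neg_deriv_leftInv (hu : HasTwoDerivsOn u u' u'' a b)
    (hv : HasTwoDerivsOn v v' v'' α β) (hab : a < b) (hαβ : α ≤ β)
    (hv' : ∀ s ∈ Ioo α β, 0 < v' s) (hσ : LeftInvOn σ v (Icc α β))
    (hmaps : MapsTo u (Ioo a b) (Ioo (v α) (v β)))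
    (hle : ∀ t ∈ Ioo a b, ∀ s ∈ Ioo α β, u t = v s → u'' t ≤ v'' s)
    (hvβ : v β = u a) (hv'β : v' β = 0) (hu'b : u' b = 0) :
    EqOn u' (fun t => -v' (σ (u t))) (Icc a b) := by
  have hnewton := hu.newtonSubsolution hv hab hαβ hv' hσ hmaps hle
  have hpos : ∀ t ∈ Ioo a b, 0 < v' (σ (u t)) := fun t ht => hv' _ <|
    (hσ.mono Ioo_subset_Icc_self).mapsTo (intermediate_value_Ioo hαβ hv.continuousOn) (hmaps ht)
  have hσa : σ (u a) = β := hvβ ▸ hσ (right_mem_Icc.2 hαβ)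
  have henergy_a : 0 ≤ energy u u' (fun y => v' (σ y) ^ 2) a := by
    simpa [energy, hσa, hv'β] using sq_nonneg (u' a)
  have henergy_b : energy u u' (fun y => v' (σ y) ^ 2) b ≤ 0 := by
    simpa [energy, hu'b] using sq_nonneg (v' (σ (u b)))
  have heq : EqOn u' (fun t => -v' (σ (u t))) (Ioo a b) := fun t ht => by
    rw [hnewton.deriv_eq_neg_sqrt henergy_a henergy_b (fun x hx => hvβ ▸ (hmaps hx).2)
      (fun x hx => pow_pos (hpos x hx) 2) ht, Real.sqrt_sq (hpos t ht).le]
  exact heq.of_subset_closure hu.continuousOn_deriv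
    ((hv.continuousOn_deriv_leftInv hαβ hσ).comp hu.continuousOn
      (mapsTo_Icc_of_mapsTo_Ioo hab hu.continuousOn hmaps)).neg
    Ioo_subset_Icc_self (closure_Ioo hab.ne).superset

theorem leftInv_comp_add_eq_of_deriv_eq_neg (hu : HasTwoDerivsOn u u' u'' a b)
    (hv : HasTwoDerivsOn v v' v'' α β) (hαβ : α ≤ β) (hv' : ∀ s ∈ Ioo α β, 0 < v' s)
    (hσ : LeftInvOn σ v (Icc α β)) (hmaps : MapsTo u (Ioo a b) (Ioo (v α) (v β)))
    (hspeed : ∀ t ∈ Ioo a b, u' t = -v' (σ (u t))) {t : ℝ} (ht : t ∈ Icc a b) :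
    σ (u t) + t = σ (u a) + a := by
  obtain rfl | hat := ht.1.eq_or_lt
  · rfl
  have hderiv : ∀ x ∈ Ioo a b, HasDerivAt (fun x => σ (u x) + x) 0 x := by
    intro x hx
    obtain ⟨s, hs, hsx⟩ := intermediate_value_Ioo hαβ hv.continuousOn (hmaps hx)
    have hσs : σ (v s) = s := hσ (Ioo_subset_Icc_self hs)
    have hσu : HasDerivAt (fun x => σ (u x)) ((v' s)⁻¹ * u' x) x :=
      HasDerivAt.comp x (hsx ▸ hv.hasDerivAt_leftInv hv' hσ hs) (hu.hasDerivAt x hx)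
    refine (hσu.add (hasDerivAt_id x)).congr_deriv ?_
    rw [hspeed x hx, ← hsx, hσs, mul_neg, inv_mul_cancel₀ (hv' s hs).ne', neg_add_cancel]
  have hcont : ContinuousOn (fun x => σ (u x) + x) (Icc a b) :=
    ((hv.continuousOn_leftInv hαβ hσ).comp hu.continuousOn
      (mapsTo_Icc_of_mapsTo_Ioo (hat.trans_le ht.2) hu.continuousOn hmaps)).add continuousOn_id
  obtain ⟨c, -, hc⟩ := exists_hasDerivAt_eq_slope (fun x => σ (u x) + x) (fun _ => 0) hat
    (hcont.mono (Icc_subset_Icc_right ht.2)) fun x hx => hderiv x ⟨hx.1, hx.2.trans_le ht.2⟩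
  exact sub_eq_zero.1 ((div_eq_zero_iff.1 hc.symm).resolve_right (sub_pos.2 hat).ne')

end HasTwoDerivsOn

theorem stmt_8_general {a b α β : ℝ} (hab : a < b) (hαβ : α < β) {u u' u'' v v' v'' : ℝ → ℝ}
    (hu : HasTwoDerivsOn u u' u'' a b) (hu'b : u' b = 0)
    (hubet : ∀ t ∈ Ioo a b, u b < u t ∧ u t < u a)
    (hv : HasTwoDerivsOn v v' v'' α β) (hv'β : v' β = 0) (hv' : ∀ s ∈ Ioo α β, 0 < v' s)
    (hvα : v α ≤ u b) (hvβ : v β = u a)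
    (hmain : ∀ t ∈ Ioo a b, ∀ s ∈ Ioo α β, u t = v s → u'' t ≤ v'' s) :
    β - α = b - a ∧ (∀ s ∈ Icc α β, v s = u (a + β - s)) ∧ v α = u b := by
  obtain ⟨σ, hσ⟩ : ∃ σ, LeftInvOn σ v (Icc α β) :=
    ⟨_, (hv.strictMonoOn hv').injOn.leftInvOn_invFunOn⟩
  have hmaps : MapsTo u (Ioo a b) (Ioo (v α) (v β)) := fun t ht =>
    ⟨hvα.trans_lt (hubet t ht).1, hvβ ▸ (hubet t ht).2⟩
  have hspeed : EqOn u' (fun t => -v' (σ (u t))) (Icc a b) :=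
    hu.deriv_eq_neg_deriv_leftInv hv hab hαβ.le hv' hσ hmaps hmain hvβ hv'β hu'b
  have hσa : σ (u a) = β := hvβ ▸ hσ (right_mem_Icc.2 hαβ.le)
  have hsum : ∀ t ∈ Icc a b, σ (u t) + t = β + a := fun t ht =>
    hσa ▸ hu.leftInv_comp_add_eq_of_deriv_eq_neg hv hαβ.le hv' hσ hmaps
      (hspeed.mono Ioo_subset_Icc_self) ht
  have hvσ : ∀ t ∈ Icc a b, σ (u t) ∈ Icc α β ∧ v (σ (u t)) = u t := by
    intro t ht
    obtain ⟨s, hs, hst⟩ := intermediate_value_Icc hαβ.le hv.continuousOn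
      (mapsTo_Icc_of_mapsTo_Ioo hab hu.continuousOn hmaps ht)
    rw [← hst, hσ hs]
    exact ⟨hs, rfl⟩
  have hb : b ∈ Icc a b := right_mem_Icc.2 hab.le
  have hσb : σ (u b) = α := by
    have hv'b : v' (σ (u b)) = 0 := neg_eq_zero.1 ((hspeed hb).symm.trans hu'b)
    by_contra hne
    exact (hv' _ ⟨(hvσ b hb).1.1.lt_of_ne' hne, by linarith [hsum b hb]⟩).ne' hv'b
  have hlen : α + b = β + a := hσb ▸ hsum b hb
  refine ⟨by linarith, fun s hs => ?_, hσb ▸ (hvσ b hb).2⟩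
  have ht : a + β - s ∈ Icc a b := ⟨by linarith [hs.2], by linarith [hs.1]⟩
  have hs_eq : σ (u (a + β - s)) = s := by linarith [hsum _ ht]
  rw [← (hvσ _ ht).2, hs_eq]

/-- Lemma 4.1″ of Li–Nirenberg: v is a reflection of u. -/
theorem stmt_8 (a b α β : ℝ) (hab : a < b) (hαβ : α < β) (u v : ℝ → ℝ)
    (hu2 : ContDiffOn ℝ 2 u (Set.Ioo a b)) (hu1 : ContDiffOn ℝ 1 u (Set.Icc a b))
    (hu'b : derivWithin u (Set.Icc a b) b = 0)
    (hubet : ∀ t ∈ Set.Ioo a b, u b < u t ∧ u t < u a)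
    (hv2 : ContDiffOn ℝ 2 v (Set.Ioo α β)) (hv1 : ContDiffOn ℝ 1 v (Set.Icc α β))
    (hv'β : derivWithin v (Set.Icc α β) β = 0)
    (hv' : ∀ s ∈ Set.Ioo α β, 0 < deriv v s)
    (hvα : v α ≤ u b) (hvβ : v β = u a)
    (hmain : ∀ t ∈ Set.Ioo a b, ∀ s ∈ Set.Ioo α β, u t = v s →
      deriv (deriv u) t ≤ deriv (deriv v) s) :
    β - α = b - a ∧ (∀ s ∈ Set.Icc α β, v s = u (a + β - s)) ∧ v α = u b :=
  stmt_8_general hab hαβ (hasTwoDerivsOn_of_contDiffOn hab hu2 hu1) hu'b hubet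
    (hasTwoDerivsOn_of_contDiffOn hαβ hv2 hv1) hv'β
    (fun s hs => (hv' s hs).trans_eq (derivWithin_of_mem_nhds (Icc_mem_nhds hs.1 hs.2)).symm)
    hvα hvβ hmain
end

section
/- Let c > 0, let f : (0,∞) → ℝ be locally Lipschitz on (0,∞), and let u be a real function on [0,c) that is continuously differentiable on [0,c), positive on (0,c), twice differentiable on (0,c), with u(0) = 0 and u''(t) = f(u(t)) for all t ∈ (0,c). Then u'(t) > 0 for all t ∈ (0, c/2). -/
/-!
If `u'` vanished at some `m` in the first half of the interval, then `t ↦ u (m + t)` and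
`t ↦ u (m - t)` would solve the same initial value problem, so `u` would be symmetric about `m` and
would return to its initial value at the reflection of the left endpoint, which is an interior
point. Hence `u'` has no zero there, so by Darboux it has constant sign; this sign is positive
because `u` rises above its initial value.
-/

open Set

theorem locallyLipschitzOn_of_forall_isCompact {α β : Type*} [PseudoEMetricSpace α]
    [LocallyCompactSpace α] [PseudoEMetricSpace β] {f : α → β} {U : Set α} (hU : IsOpen U)
    (hf : ∀ K ⊆ U, IsCompact K → ∃ L : NNReal, LipschitzOnWith L f K) :
    LocallyLipschitzOn U f := by
  intro x hx
  obtain ⟨K, hK_nhds, hKU, hK⟩ := local_compact_nhds (hU.mem_nhds hx)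
  obtain ⟨L, hL⟩ := hf K hKU hK
  exact ⟨L, K, mem_nhdsWithin_of_mem_nhds hK_nhds, hL⟩

section SecondOrderODE

variable {E : Type*} [NormedAddCommGroup E] [NormedSpace ℝ E] {f : E → E}

theorem second_order_ODE_solution_unique_of_mem_Icc_right {x x' y y' : ℝ → E} {L : NNReal}
    {s : Set E} {a b : ℝ} (hf : LipschitzOnWith L f s)
    (hx : ∀ t ∈ Icc a b, HasDerivWithinAt x (x' t) (Icc a b) t)
    (hx' : ∀ t ∈ Icc a b, HasDerivWithinAt x' (f (x t)) (Icc a b) t)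
    (hxs : MapsTo x (Ico a b) s)
    (hy : ∀ t ∈ Icc a b, HasDerivWithinAt y (y' t) (Icc a b) t)
    (hy' : ∀ t ∈ Icc a b, HasDerivWithinAt y' (f (y t)) (Icc a b) t)
    (hys : MapsTo y (Ico a b) s) (ha : x a = y a) (ha' : x' a = y' a) :
    EqOn x y (Icc a b) := by
  have hphase : LipschitzOnWith (max 1 (L * 1)) (fun p : E × E => (p.2, f p.1))
      (Prod.fst ⁻¹' s) :=
    LipschitzWith.prod_snd.lipschitzOnWith.prodMk
      (hf.comp LipschitzWith.prod_fst.lipschitzOnWith fun _ hp => hp)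
  have hX t (ht : t ∈ Icc a b) := (hx t ht).prodMk (hx' t ht)
  have hY t (ht : t ∈ Icc a b) := (hy t ht).prodMk (hy' t ht)
  have heq := ODE_solution_unique_of_mem_Icc_right (fun _ _ => hphase)
    (fun t ht => (hX t ht).continuousWithinAt)
    (fun t ht => (hX t (Ico_subset_Icc_self ht)).mono_of_mem_nhdsWithin (Icc_mem_nhdsGE_of_mem ht))
    hxs
    (fun t ht => (hY t ht).continuousWithinAt)
    (fun t ht => (hY t (Ico_subset_Icc_self ht)).mono_of_mem_nhdsWithin (Icc_mem_nhdsGE_of_mem ht))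
    hys (Prod.ext ha ha')
  exact fun t ht => congrArg Prod.fst (heq ht)

theorem apply_add_eq_apply_sub_of_lipschitzOnWith {u : ℝ → E} {L : NNReal} {m r : ℝ} (hr : 0 ≤ r)
    (hf : LipschitzOnWith L f (u '' Icc (m - r) (m + r)))
    (hu : ∀ t ∈ Icc (m - r) (m + r), DifferentiableAt ℝ u t)
    (hode : ∀ t ∈ Icc (m - r) (m + r), HasDerivAt (deriv u) (f (u t)) t)
    (hm : deriv u m = 0) : u (m + r) = u (m - r) := by
  have hadd : MapsTo (m + ·) (Icc 0 r) (Icc (m - r) (m + r)) := fun t ht =>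
    ⟨by linarith [ht.1], by linarith [ht.2]⟩
  have hsub : MapsTo (m - ·) (Icc 0 r) (Icc (m - r) (m + r)) := fun t ht =>
    ⟨by linarith [ht.2], by linarith [ht.1]⟩
  refine second_order_ODE_solution_unique_of_mem_Icc_right (x := fun t => u (m + t))
    (x' := fun t => deriv u (m + t)) (y := fun t => u (m - t)) (y' := fun t => -deriv u (m - t)) hf
    (fun t ht => ((hu _ (hadd ht)).hasDerivAt.comp_const_add m t).hasDerivWithinAt)
    (fun t ht => ((hode _ (hadd ht)).comp_const_add m t).hasDerivWithinAt)
    (fun t ht => mem_image_of_mem u (hadd (Ico_subset_Icc_self ht)))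
    (fun t ht => ((hu _ (hsub ht)).hasDerivAt.comp_const_sub m t).hasDerivWithinAt)
    (fun t ht => ?_)
    (fun t ht => mem_image_of_mem u (hsub (Ico_subset_Icc_self ht)))
    (by simp) (by simp [hm]) (right_mem_Icc.2 hr)
  simpa only [neg_neg] using ((hode _ (hsub ht)).comp_const_sub m t).fun_neg.hasDerivWithinAt

variable {u : ℝ → E} {a b m : ℝ}

theorem apply_add_eq_apply_sub_of_deriv_eq_zero (hf : LocallyLipschitzOn (u '' Ioo a b) f)
    (hu : DifferentiableOn ℝ u (Ioo a b))
    (hode : ∀ t ∈ Ioo a b, HasDerivAt (deriv u) (f (u t)) t) (hm : deriv u m = 0) {r : ℝ}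
    (hr : 0 ≤ r) (hsub : Icc (m - r) (m + r) ⊆ Ioo a b) : u (m + r) = u (m - r) := by
  have hcompact : IsCompact (u '' Icc (m - r) (m + r)) :=
    isCompact_Icc.image_of_continuousOn (hu.continuousOn.mono hsub)
  obtain ⟨L, hL⟩ := (hf.mono (image_mono hsub)).exists_lipschitzOnWith_of_compact hcompact
  exact apply_add_eq_apply_sub_of_lipschitzOnWith hr hL
    (fun t ht => hu.differentiableAt (isOpen_Ioo.mem_nhds (hsub ht)))
    (fun t ht => hode t (hsub ht)) hm

-- The ODE need not extend to the left endpoint, so the symmetry reaches it only by continuity.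
theorem apply_reflection_left_eq_of_deriv_eq_zero (hf : LocallyLipschitzOn (u '' Ioo a b) f)
    (hcont : ContinuousOn u (Ico a b)) (hu : DifferentiableOn ℝ u (Ioo a b))
    (hode : ∀ t ∈ Ioo a b, HasDerivAt (deriv u) (f (u t)) t) (hm : deriv u m = 0)
    (hmem : m ∈ Ioo a ((a + b) / 2)) : u (m + (m - a)) = u a := by
  obtain ⟨ham, hmb⟩ := hmem
  have hsymm : EqOn (fun r => u (m + r)) (fun r => u (m - r)) (Ico 0 (m - a)) := fun r hr =>
    apply_add_eq_apply_sub_of_deriv_eq_zero hf hu hode hm hr.1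
      fun t ht => ⟨by linarith [hr.2, ht.1], by linarith [hr.2, ht.2]⟩
  have hsymm_closed : EqOn (fun r => u (m + r)) (fun r => u (m - r)) (Icc 0 (m - a)) := by
    refine hsymm.of_subset_closure ?_ ?_ Ico_subset_Icc_self (closure_Ico (sub_pos.2 ham).ne).ge
    · exact hcont.comp (by fun_prop) fun r hr => ⟨by linarith [hr.1], by linarith [hr.2]⟩
    · exact hcont.comp (by fun_prop) fun r hr => ⟨by linarith [hr.2], by linarith [hr.1]⟩
  simpa only [sub_sub_cancel] using hsymm_closed (right_mem_Icc.2 (sub_nonneg.2 ham.le))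

end SecondOrderODE

theorem deriv_pos_of_deriv_ne_zero_of_lt {u : ℝ → ℝ} {a b m : ℝ} (hcont : ContinuousOn u (Ico a b))
    (hne : ∀ t ∈ Ioo a b, deriv u t ≠ 0) (hm : m ∈ Ioo a b) (hlt : u a < u m) :
    ∀ t ∈ Ioo a b, 0 < deriv u t := by
  have hderiv : ∀ t ∈ Ioo a b, HasDerivWithinAt u (deriv u t) (Ioo a b) t := fun t ht =>
    (differentiableAt_of_deriv_ne_zero (hne t ht)).hasDerivAt.hasDerivWithinAt
  refine (hasDerivWithinAt_forall_lt_or_forall_gt_of_forall_ne (convex_Ioo a b) hderiv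
    hne).resolve_left fun hneg => hlt.not_gt ?_
  have hanti : StrictAntiOn u (Ico a b) :=
    strictAntiOn_of_deriv_neg (convex_Ico a b) hcont (by rwa [interior_Ico])
  exact hanti (left_mem_Ico.2 (hm.1.trans hm.2)) (Ioo_subset_Ico_self hm) hm.1

theorem stmt_19_general {a b : ℝ} {f u : ℝ → ℝ} (hf : LocallyLipschitzOn (u '' Ioo a b) f)
    (hcont : ContinuousOn u (Ico a b)) (hu : DifferentiableOn ℝ u (Ioo a b))
    (hlt : ∀ t ∈ Ioo a b, u a < u t)
    (hode : ∀ t ∈ Ioo a b, HasDerivAt (deriv u) (f (u t)) t) :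
    ∀ t ∈ Ioo a ((a + b) / 2), 0 < deriv u t := by
  rintro t ⟨hat, htb⟩
  have hne : ∀ m ∈ Ioo a ((a + b) / 2), deriv u m ≠ 0 := fun m hm hzero =>
    (hlt (m + (m - a)) ⟨by linarith [hm.1], by linarith [hm.2]⟩).ne'
      (apply_reflection_left_eq_of_deriv_eq_zero hf hcont hu hode hzero hm)
  exact deriv_pos_of_deriv_ne_zero_of_lt (hcont.mono (Ico_subset_Ico_right (by linarith))) hne
    ⟨hat, htb⟩ (hlt t ⟨hat, by linarith⟩) t ⟨hat, htb⟩

/-- The Claim inside the proof of Lemma 2.3 of Li–Nirenberg: a positive solution of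
u'' = f(u) vanishing at 0 must be strictly increasing on the first half of its
interval of definition. -/
theorem stmt_19 (c : ℝ) (hc : 0 < c) (f : ℝ → ℝ)
    (hf : ∀ s : Set ℝ, s ⊆ Set.Ioi 0 → IsCompact s → ∃ L : NNReal, LipschitzOnWith L f s)
    (u : ℝ → ℝ)
    (hu1 : ContDiffOn ℝ 1 u (Set.Ico 0 c))
    (hupos : ∀ t ∈ Set.Ioo 0 c, 0 < u t)
    (hu0 : u 0 = 0)
    (hueq : ∀ t ∈ Set.Ioo 0 c, HasDerivAt (deriv u) (f (u t)) t) :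
    ∀ t ∈ Set.Ioo 0 (c / 2), 0 < deriv u t := by
  have hlip : LocallyLipschitzOn (u '' Ioo 0 c) f :=
    (locallyLipschitzOn_of_forall_isCompact isOpen_Ioi hf).mono (image_subset_iff.2 hupos)
  simpa only [zero_add] using stmt_19_general hlip hu1.continuousOn
    ((hu1.differentiableOn one_ne_zero).mono Ioo_subset_Ico_self) (by simpa only [hu0]) hueq
end
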